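/- Let ρ = exp(−H₀) and ρ_X = exp(−(H₀+X)) be finite faithful weights on a separable Hilbert space H with X a bounded operator satisfying the Araki condition for ρ, and set M = ‖X‖_A = sup_{|t|<1/2} ‖ρ^t X ρ^{−t}‖. Then, as quadratic forms, ρ^{1/2} ρ_X^{−1} ρ^{1/2} ≤ e^M · I, hence ρ_X^{−1} ≤ e^M ρ^{−1}, and by operator-monotone decrease of the inverse map, ρ_X ≥ e^{−M} ρ in the Loewner order. -/

import Mathlib

open scoped InnerProductSpace ENNReal NNReal
open MeasureTheory Metric Filter

noncomputable section

variable {H : Type*} [NormedAddCommGroup H] [InnerProductSpace ℂ H] [CompleteSpace H]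
  [TopologicalSpace.SeparableSpace H]

/-- The real power `ρ ^ t` (for `t ≥ 0`) of a positive operator `ρ`, via the continuous
functional calculus. -/
def opow (ρ : H →L[ℂ] H) (t : ℝ) : H →L[ℂ] H := cfc (fun x : ℝ => x ^ t) ρ

/-- The (real) trace of an operator, computed along the Hilbert basis `b`. -/
def trElem {ι : Type*} (b : HilbertBasis ι ℂ H) (T : H →L[ℂ] H) : ℝ :=
  ∑' i, (⟪b i, T (b i)⟫_ℂ).re

/-- `ρ` is a finite faithful weight: a positive, injective, trace-class operator
(trace-class being witnessed by summability of the diagonal in the Hilbert basis `b`). -/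
def IsFiniteWeight {ι : Type*} (b : HilbertBasis ι ℂ H) (ρ : H →L[ℂ] H) : Prop :=
  0 ≤ ρ ∧ Function.Injective (⇑ρ) ∧ Summable (fun i => (⟪b i, ρ (b i)⟫_ℂ).re)

/-- `σ` is nearby `ρ`: there is `C > 1` with `C⁻¹ ρ ≤ σ ≤ C ρ` in the Loewner order. -/
def IsNearby (σ ρ : H →L[ℂ] H) : Prop :=
  ∃ C : ℝ, 1 < C ∧ C⁻¹ • ρ ≤ σ ∧ σ ≤ C • ρ

/-- `F` is the Araki family `t ↦ ρ^t X ρ^{-t}` of `X` relative to `ρ`: a bounded holomorphic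
`B(H)`-valued extension to the disc `|t| < 1/2` of `t ↦ ρ^t X ρ^{-t}`, the latter being
expressed by `F t * ρ^t = ρ^t * X` and `ρ^t * F (-t) = X * ρ^t` for real `0 ≤ t < 1/2`. -/
def IsArakiFamily (ρ X : H →L[ℂ] H) (F : ℂ → H →L[ℂ] H) : Prop :=
  DifferentiableOn ℂ F (ball (0:ℂ) (1/2)) ∧
  (∃ M : ℝ, ∀ t ∈ ball (0:ℂ) (1/2), ‖F t‖ ≤ M) ∧
  (∀ t : ℝ, 0 ≤ t → t < 1/2 → F (t:ℂ) * opow ρ t = opow ρ t * X) ∧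
  (∀ t : ℝ, 0 ≤ t → t < 1/2 → opow ρ t * F (-(t:ℂ)) = X * opow ρ t)

/-- `X` satisfies the Araki condition for `ρ`. -/
def SatisfiesAraki (ρ X : H →L[ℂ] H) : Prop := ∃ F, IsArakiFamily ρ X F

/-- The Araki norm `‖X‖_A = sup_{|t| < 1/2} ‖ρ^t X ρ^{-t}‖`. -/
def arakiNorm (ρ X : H →L[ℂ] H) : ℝ :=
  sInf {M : ℝ | 0 ≤ M ∧ ∃ F, IsArakiFamily ρ X F ∧ ∀ t ∈ ball (0:ℂ) (1/2), ‖F t‖ ≤ M}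

/-- `σ = exp (-(H₀ + X))` where `ρ = exp (-H₀)`: the semigroup `t ↦ σ^t` is the mild
(Duhamel) solution of the semigroup `t ↦ ρ^t` perturbed by the bounded operator `-X`,
i.e. `σ^t = ρ^t - ∫_0^t ρ^{t-s} X σ^s ds` for all `t ≥ 0`. -/
def IsExpPerturbed (ρ σ X : H →L[ℂ] H) : Prop :=
  ∀ t : ℝ, 0 ≤ t →
    opow σ t = opow ρ t - ∫ s in (0:ℝ)..t, opow ρ (t - s) * X * opow σ s

/-- The truncation `x ↦ -log (x + e^{-n})` of `-log`; it increases pointwise to `-log x`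
as `n → ∞` and is operator anti-monotone. -/
def negLogTrunc (n : ℕ) (x : ℝ) : ℝ := - Real.log (x + Real.exp (-(n:ℝ)))

/-- The regularised quadratic form `⟪ξ, (-log (ρ + e^{-n})) ξ⟫` of `H₀ = -log ρ`. -/
def negLogFormSeq (ρ : H →L[ℂ] H) (ξ : H) (n : ℕ) : ℝ :=
  (⟪ξ, (cfc (negLogTrunc n) ρ) ξ⟫_ℂ).re

/-- `ξ` lies in the form domain `Q(H₀) = Dom (H₀^{1/2})` of `H₀ = -log ρ`. -/
def InFormDomain (ρ : H →L[ℂ] H) (ξ : H) : Prop :=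
  BddAbove (Set.range (negLogFormSeq ρ ξ))

/-- The value `⟪ξ, H₀ ξ⟫` of the quadratic form of `H₀ = -log ρ` (a monotone limit). -/
def negLogForm (ρ : H →L[ℂ] H) (ξ : H) : ℝ := ⨆ n, negLogFormSeq ρ ξ n

/-- The regularised quadratic form `⟪ξ, (σ + e^{-n})⁻¹ ξ⟫` of `σ⁻¹`. -/
def invFormSeq (σ : H →L[ℂ] H) (ξ : H) (n : ℕ) : ℝ :=
  (⟪ξ, (cfc (fun x : ℝ => (x + Real.exp (-(n:ℝ)))⁻¹) σ) ξ⟫_ℂ).re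

/-- The quadratic form `⟪ξ, σ⁻¹ ξ⟫ ∈ [0, ∞]` of the (possibly unbounded) inverse `σ⁻¹`
of the injective positive operator `σ`, as a monotone limit of regularisations. -/
def invForm (σ : H →L[ℂ] H) (ξ : H) : ℝ≥0∞ :=
  ⨆ n : ℕ, ENNReal.ofReal (invFormSeq σ ξ n)

/-- `S` is the relative entropy `S(ρ|σ) = Tr (ρ (log ρ - log σ))`, obtained as the limit of
the regularised quantities `Tr (ρ (log (ρ + e^{-n}) - log (σ + e^{-n})))`. -/
def IsRelativeEntropy {ι : Type*} (b : HilbertBasis ι ℂ H) (ρ σ : H →L[ℂ] H) (S : ℝ) : Prop :=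
  Tendsto (fun n : ℕ => trElem b (ρ * (cfc (negLogTrunc n) σ - cfc (negLogTrunc n) ρ)))
    atTop (nhds S)

/-- The `n`-th term of the Matsubara (Dyson/expansional) series: the integral over the
ordered simplex `0 ≤ s₁ ≤ ⋯ ≤ sₙ ≤ 1` (of volume `1/n!`) of the product
`F(s₁ - 1/2) ⋯ F(sₙ - 1/2)`, where `F t = ρ^t X ρ^{-t}`. -/
def matsubaraTerm (F : ℂ → H →L[ℂ] H) (n : ℕ) : H →L[ℂ] H :=
  ∫ s in {s : Fin n → ℝ | (∀ i, s i ∈ Set.Icc (0:ℝ) 1) ∧ Monotone s},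
    (List.ofFn fun i => F (((s i - 1/2 : ℝ) : ℂ))).prod

lemma opow_zero_eq (ρ : H →L[ℂ] H) (hρ : 0 ≤ ρ) : opow ρ 0 = 1 := by
  unfold opow
  simp only [Real.rpow_zero]
  exact cfc_const_one ℝ ρ

lemma spec_mem (ρ : H →L[ℂ] H) (hρ : 0 ≤ ρ) {x : ℝ} (hx : x ∈ spectrum ℝ ρ) :
    0 ≤ x ∧ x ≤ max 1 (‖ρ‖ * ‖(1 : H →L[ℂ] H)‖) := by
  refine ⟨spectrum_nonneg_of_nonneg hρ hx, ?_⟩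
  have := spectrum.norm_le_norm_mul_of_mem hx
  exact (le_abs_self x).trans (this.trans (le_max_right _ _))

lemma opow_add_eq (ρ : H →L[ℂ] H) (hρ : 0 ≤ ρ) {s t : ℝ} (hs : 0 ≤ s) (ht : 0 ≤ t) :
    opow ρ (s + t) = opow ρ s * opow ρ t := by
  unfold opow
  rw [← cfc_mul _ _ ρ (Real.continuous_rpow_const hs).continuousOn
    (Real.continuous_rpow_const ht).continuousOn]
  apply cfc_congr
  intro x hx
  exact Real.rpow_add_of_nonneg (spec_mem ρ hρ hx).1 hs ht

lemma opow_one_eq (ρ : H →L[ℂ] H) (hρ : 0 ≤ ρ) : opow ρ 1 = ρ := by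
  unfold opow
  simp only [Real.rpow_one]
  exact cfc_id' ℝ ρ

lemma opow_norm_le (ρ : H →L[ℂ] H) (hρ : 0 ≤ ρ) :
    ∃ C : ℝ, 0 ≤ C ∧ ∀ s : ℝ, 0 ≤ s → s ≤ 1 → ‖opow ρ s‖ ≤ C := by
  refine ⟨max 1 (‖ρ‖ * ‖(1 : H →L[ℂ] H)‖), by positivity, fun s hs hs1 => ?_⟩
  refine norm_cfc_le (by positivity) fun x hx => ?_
  obtain ⟨h0, h1⟩ := spec_mem ρ hρ hx
  rw [Real.norm_of_nonneg (Real.rpow_nonneg h0 _)]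
  calc x ^ s ≤ (max 1 (‖ρ‖ * ‖(1 : H →L[ℂ] H)‖)) ^ s := Real.rpow_le_rpow h0 h1 hs
    _ ≤ (max 1 (‖ρ‖ * ‖(1 : H →L[ℂ] H)‖)) ^ (1:ℝ) :=
        Real.rpow_le_rpow_of_exponent_le (le_max_left _ _) hs1
    _ = _ := Real.rpow_one _

lemma opow_continuousOn (ρ : H →L[ℂ] H) : ContinuousOn (opow ρ) (Set.Ioi 0) := by
  intro s hs
  apply ContinuousAt.continuousWithinAt
  unfold opow
  refine continuousAt_cfc_fun (f := fun (s : ℝ) (x : ℝ) => x ^ s) ?_ ?_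
  · rw [tendstoUniformlyOn_iff_tendstoUniformly_comp_coe]
    haveI : CompactSpace (spectrum ℝ ρ) :=
      isCompact_iff_compactSpace.mp (ContinuousFunctionalCalculus.isCompact_spectrum ρ)
    refine ContinuousOn.tendstoUniformly
      (f := fun (s : ℝ) (x : spectrum ℝ ρ) => (x : ℝ) ^ s) (U := Set.Ioi 0) (Ioi_mem_nhds hs) ?_
    rintro ⟨r, x⟩ ⟨hr, -⟩
    apply ContinuousAt.continuousWithinAt
    have h1 := Real.continuousAt_rpow_of_pos ((x : ℝ), r) hr
    have h2 : ContinuousAt (fun p : ℝ × spectrum ℝ ρ => ((p.2 : ℝ), p.1)) (r, x) := by fun_prop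
    exact ContinuousAt.comp (f := fun p : ℝ × spectrum ℝ ρ => ((p.2 : ℝ), p.1)) h1 h2
  · filter_upwards [Ioi_mem_nhds hs] with r hr
    exact (Real.continuous_rpow_const (le_of_lt hr)).continuousOn

lemma duhamel_integrable (ρ σ X : H →L[ℂ] H) (hρ : 0 ≤ ρ) (hσ : 0 ≤ σ) {t : ℝ} (ht : 0 ≤ t)
    (ht1 : t ≤ 1) :
    IntervalIntegrable (fun s => opow ρ (t - s) * X * opow σ s) volume 0 t := by
  rw [intervalIntegrable_iff_integrableOn_Ioo_of_le ht]
  obtain ⟨C, hC, hCρ⟩ := opow_norm_le ρ hρ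
  obtain ⟨D, hD, hDσ⟩ := opow_norm_le σ hσ
  refine IntegrableOn.of_bound (by simp) ?_ (C * ‖X‖ * D) ?_
  · refine ContinuousOn.aestronglyMeasurable ?_ measurableSet_Ioo
    refine ContinuousOn.mul (ContinuousOn.mul ?_ continuousOn_const) ?_
    · exact (opow_continuousOn ρ).comp (by fun_prop) fun s hs => by
        simpa using hs.2
    · exact (opow_continuousOn σ).mono fun s hs => hs.1
  · filter_upwards [ae_restrict_mem measurableSet_Ioo] with s hs
    refine (norm_mul_le _ _).trans ?_
    refine mul_le_mul ((norm_mul_le _ _).trans ?_) (hDσ s hs.1.le (hs.2.le.trans ht1))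
      (norm_nonneg _) (by positivity)
    exact mul_le_mul_of_nonneg_right (hCρ _ (by linarith [hs.2]) (by linarith [hs.1]))
      (norm_nonneg _)

lemma interp_formula (ρ σ X : H →L[ℂ] H) (hρ : 0 ≤ ρ) (hσ : 0 ≤ σ)
    (hσX : IsExpPerturbed ρ σ X) (ζ : H) {t : ℝ} (ht : 0 ≤ t) (ht1 : t ≤ 1 / 2) :
    opow ρ t (opow σ (1/2 - t) ζ) = opow σ (1/2) ζ +
      ∫ r in (0:ℝ)..t, opow ρ r (X (opow σ (1/2 - r) ζ)) := by
  have h1 := hσX t ht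
  have hint := duhamel_integrable ρ σ X hρ hσ ht (by linarith)
  have h2 := (ContinuousLinearMap.apply ℂ H (opow σ (1/2 - t) ζ)).intervalIntegral_comp_comm hint
  have h3 : opow σ (1/2) ζ = opow σ t (opow σ (1/2 - t) ζ) := by
    have h6 : opow σ (1/2) = opow σ t * opow σ (1/2 - t) := by
      rw [← opow_add_eq σ hσ ht (by linarith)]
      congr 1
      ring
    conv_lhs => rw [h6]
    rfl
  have h4 : ∫ r in (0:ℝ)..t, opow ρ r (X (opow σ (1/2 - r) ζ)) =
      ∫ s in (0:ℝ)..t, (ContinuousLinearMap.apply ℂ H (opow σ (1/2 - t) ζ))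
        (opow ρ (t - s) * X * opow σ s) := by
    have := intervalIntegral.integral_comp_sub_left (a := 0) (b := t)
      (fun r => opow ρ r (X (opow σ (1/2 - r) ζ))) t
    simp only [sub_self, sub_zero] at this
    rw [← this]
    apply intervalIntegral.integral_congr
    intro s hs
    rw [Set.uIcc_of_le ht] at hs
    have h5 : opow σ (1/2 - (t - s)) = opow σ s * opow σ (1/2 - t) := by
      rw [← opow_add_eq σ hσ hs.1 (by linarith)]
      congr 1
      ring
    show opow ρ (t - s) (X (opow σ (1/2 - (t - s)) ζ)) = _
    rw [h5]
    rfl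
  rw [h4, h2, h3]
  conv_lhs => rw [show opow ρ t = opow σ t + ∫ s in (0:ℝ)..t, opow ρ (t - s) * X * opow σ s by
    rw [h1]; abel]
  simp

lemma interp_integrable (ρ σ X : H →L[ℂ] H) (hρ : 0 ≤ ρ) (hσ : 0 ≤ σ) (ζ : H) :
    IntervalIntegrable (fun r => opow ρ r (X (opow σ (1/2 - r) ζ))) volume 0 (1/2) := by
  have h := (duhamel_integrable ρ σ X hρ hσ (t := 1/2) (by norm_num) (by norm_num)).comp_sub_left
    (1/2)
  simp only [sub_self, sub_zero, sub_sub_cancel] at h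
  rw [intervalIntegrable_iff] at h ⊢
  rw [Set.uIoc_comm] at h
  exact (ContinuousLinearMap.apply ℂ H ζ).integrable_comp h

lemma interp_bound (ρ σ X : H →L[ℂ] H) (hρ : 0 ≤ ρ) (hσ : 0 ≤ σ)
    (F : ℂ → H →L[ℂ] H) (hF : IsArakiFamily ρ X F)
    (M : ℝ) (hM : ∀ t ∈ ball (0:ℂ) (1/2), ‖F t‖ ≤ M)
    (hσX : IsExpPerturbed ρ σ X) (ζ : H) :
    ‖opow ρ (1/2) ζ‖ ≤ Real.exp (M / 2) * ‖opow σ (1/2) ζ‖ := by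
  set u : ℝ → H := fun t => opow ρ t (opow σ (1/2 - t) ζ) with hu
  set g : ℝ → H := fun r => opow ρ r (X (opow σ (1/2 - r) ζ)) with hg
  have hform : ∀ t ∈ Set.Icc (0:ℝ) (1/2), u t = opow σ (1/2) ζ + ∫ r in (0:ℝ)..t, g r :=
    fun t ht => interp_formula ρ σ X hρ hσ hσX ζ ht.1 ht.2
  have hint : IntervalIntegrable g volume 0 (1/2) := interp_integrable ρ σ X hρ hσ ζ
  have hucont : ContinuousOn u (Set.Icc 0 (1/2)) := by
    have := intervalIntegral.continuousOn_primitive_interval' hint Set.left_mem_uIcc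
    rw [Set.uIcc_of_le (by norm_num)] at this
    exact (continuousOn_const.add this).congr hform
  have hball : ∀ t ∈ Set.Ico (0:ℝ) (1/2), (t : ℂ) ∈ ball (0:ℂ) (1/2) := by
    intro t ht
    simp only [mem_ball_zero_iff, Complex.norm_real, Real.norm_of_nonneg ht.1]
    exact ht.2
  have hgF : ∀ t ∈ Set.Ico (0:ℝ) (1/2), g t = F t (u t) := by
    intro t ht
    have := hF.2.2.1 t ht.1 ht.2
    have := congrArg (fun T : H →L[ℂ] H => T (opow σ (1/2 - t) ζ)) this
    simpa [hg, hu] using this.symm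
  have hgcont : ContinuousOn g (Set.Ico 0 (1/2)) := by
    refine ContinuousOn.congr ?_ hgF
    refine ContinuousOn.clm_apply ?_ (hucont.mono Set.Ico_subset_Icc_self)
    exact hF.1.continuousOn.comp Complex.continuous_ofReal.continuousOn hball
  have hderiv : ∀ x ∈ Set.Ico (0:ℝ) (1/2), HasDerivWithinAt u (g x) (Set.Ici x) x := by
    intro x hx
    have hsub : Set.Ico x (1/2) ∈ nhdsWithin x (Set.Ici x) := Ico_mem_nhdsGE hx.2
    have hc : ContinuousOn g (Set.Ico x (1/2)) := hgcont.mono (Set.Ico_subset_Ico_left hx.1)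
    have hcw : ContinuousWithinAt g (Set.Ici x) x :=
      (hc x ⟨le_rfl, hx.2⟩).mono_of_mem_nhdsWithin hsub
    have hd : HasDerivWithinAt (fun t => ∫ r in (0:ℝ)..t, g r) (g x) (Set.Ici x) x := by
      refine intervalIntegral.integral_hasDerivWithinAt_right (t := Set.Ioi x) ?_ ?_ ?_
      · refine hint.mono_set ?_
        rw [Set.uIcc_of_le hx.1, Set.uIcc_of_le (by norm_num)]
        exact Set.Icc_subset_Icc_right hx.2.le
      · refine ⟨Set.Ico x (1/2), nhdsWithin_mono _ Set.Ioi_subset_Ici_self hsub, ?_⟩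
        exact hc.aestronglyMeasurable measurableSet_Ico
      · exact hcw.mono Set.Ioi_subset_Ici_self
    refine (hd.const_add (opow σ (1/2) ζ)).congr_of_eventuallyEq ?_ (hform x ⟨hx.1, hx.2.le⟩)
    filter_upwards [hsub] with t ht
    exact hform t ⟨hx.1.trans ht.1, ht.2.le⟩
  have key := norm_le_gronwallBound_of_norm_deriv_right_le (δ := ‖u 0‖) (K := M) (ε := 0)
    hucont hderiv le_rfl (fun x hx => by
      rw [hgF x hx, add_zero]
      exact (F x).le_of_opNorm_le (hM _ (hball x hx)) _) (1/2) ⟨by norm_num, le_rfl⟩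
  rw [gronwallBound_ε0] at key
  have e0 : u 0 = opow σ (1/2) ζ := by simp [hu, opow_zero_eq ρ hρ]
  have e1 : u (1/2) = opow ρ (1/2) ζ := by simp [hu, opow_zero_eq σ hσ]
  rw [e0, e1, mul_comm, sub_zero, mul_one_div] at key
  exact key

lemma opow_half_sq (ρ : H →L[ℂ] H) (hρ : 0 ≤ ρ) (ζ : H) :
    (⟪ρ ζ, ζ⟫_ℂ) = ((‖opow ρ (1/2) ζ‖ ^ 2 : ℝ) : ℂ) := by
  have hsa : IsSelfAdjoint (opow ρ (1/2)) := cfc_predicate _ ρ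
  have h : ρ = opow ρ (1/2) * opow ρ (1/2) := by
    rw [← opow_add_eq ρ hρ (by norm_num) (by norm_num)]
    norm_num [opow_one_eq ρ hρ]
  have h2 : ρ ζ = opow ρ (1/2) (opow ρ (1/2) ζ) := by
    conv_lhs => rw [h]
    rfl
  rw [h2, ← ContinuousLinearMap.adjoint_inner_right, ← ContinuousLinearMap.star_eq_adjoint,
    hsa.star_eq, inner_self_eq_norm_sq_to_K]
  simp

lemma loewner_bound (ρ σ : H →L[ℂ] H) (hρ : 0 ≤ ρ) (hσ : 0 ≤ σ) (M : ℝ)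
    (h : ∀ ζ, ‖opow ρ (1/2) ζ‖ ≤ Real.exp (M / 2) * ‖opow σ (1/2) ζ‖) :
    Real.exp (-M) • ρ ≤ σ := by
  rw [ContinuousLinearMap.le_def, ContinuousLinearMap.isPositive_iff_complex]
  intro ζ
  have e : ⟪(σ - Real.exp (-M) • ρ) ζ, ζ⟫_ℂ =
      ((‖opow σ (1/2) ζ‖ ^ 2 - Real.exp (-M) * ‖opow ρ (1/2) ζ‖ ^ 2 : ℝ) : ℂ) := by
    rw [ContinuousLinearMap.sub_apply, inner_sub_left, opow_half_sq σ hσ,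
      ContinuousLinearMap.smul_apply, ← Complex.coe_smul, inner_smul_left, opow_half_sq ρ hρ]
    push_cast
    simp [Complex.conj_ofReal, ← Complex.exp_conj]
  rw [e]
  refine ⟨by rw [RCLike.re_to_complex, Complex.ofReal_re], ?_⟩
  simp only [RCLike.re_to_complex, Complex.ofReal_re, sub_nonneg]
  have h1 : ‖opow ρ (1/2) ζ‖ ^ 2 ≤ Real.exp M * ‖opow σ (1/2) ζ‖ ^ 2 := by
    calc _ ≤ (Real.exp (M / 2) * ‖opow σ (1/2) ζ‖) ^ 2 := by gcongr; exact h ζ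
      _ = _ := by rw [mul_pow, ← Real.exp_nat_mul]; congr 2; push_cast; ring
  calc _ ≤ Real.exp (-M) * (Real.exp M * ‖opow σ (1/2) ζ‖ ^ 2) := by gcongr
    _ = _ := by rw [← mul_assoc, ← Real.exp_add]; simp

/-- The resolvent unit. -/
def resUnit (ρ : H →L[ℂ] H) (hρ : 0 ≤ ρ) (ε : ℝ) (hε : 0 < ε) : (H →L[ℂ] H)ˣ :=
  have hc : ContinuousOn (fun x : ℝ => (x + ε)⁻¹) (spectrum ℝ ρ) :=
    ContinuousOn.inv₀ (by fun_prop) fun x hx => by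
      have := (spec_mem ρ hρ hx).1
      positivity
  have hm : cfc (fun x : ℝ => x + ε) ρ * cfc (fun x : ℝ => (x + ε)⁻¹) ρ = 1 := by
    rw [← cfc_mul _ _ ρ (by fun_prop) hc, ← cfc_one ℝ ρ]
    apply cfc_congr
    intro x hx
    have := (spec_mem ρ hρ hx).1
    have : x + ε ≠ 0 := by positivity
    simp [this]
  { val := cfc (fun x : ℝ => x + ε) ρ
    inv := cfc (fun x : ℝ => (x + ε)⁻¹) ρ
    val_inv := hm
    inv_val := by rw [← hm]; exact (cfc_commute_cfc _ _ ρ).eq }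

lemma resUnit_val (ρ : H →L[ℂ] H) (hρ : 0 ≤ ρ) (ε : ℝ) (hε : 0 < ε) :
    (resUnit ρ hρ ε hε : H →L[ℂ] H) = ρ + algebraMap ℝ _ ε := by
  show cfc (fun x : ℝ => x + ε) ρ = _
  rw [cfc_add_const ε (fun x => x) ρ, cfc_id' ℝ ρ]

lemma resUnit_inv (ρ : H →L[ℂ] H) (hρ : 0 ≤ ρ) (ε : ℝ) (hε : 0 < ε) :
    (↑(resUnit ρ hρ ε hε)⁻¹ : H →L[ℂ] H) = cfc (fun x : ℝ => (x + ε)⁻¹) ρ := rfl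

lemma resolvent_le (ρ σ : H →L[ℂ] H) (hρ : 0 ≤ ρ) (hσ : 0 ≤ σ) (M : ℝ) (hM : 0 ≤ M)
    (h : Real.exp (-M) • ρ ≤ σ) (ε : ℝ) (hε : 0 < ε) :
    cfc (fun x : ℝ => (x + ε)⁻¹) σ ≤ Real.exp M • cfc (fun x : ℝ => (x + ε)⁻¹) ρ := by
  have hρ' : 0 ≤ Real.exp (-M) • ρ := smul_nonneg (Real.exp_pos _).le hρ
  have h1 := CStarAlgebra.inv_le_inv (a := resUnit _ hρ' ε hε) (b := resUnit σ hσ ε hε) (by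
      rw [resUnit_val]
      exact add_nonneg hρ' (algebraMap_nonneg _ hε.le)) (by
      rw [resUnit_val, resUnit_val]
      exact add_le_add_left h _)
  rw [resUnit_inv, resUnit_inv] at h1
  refine h1.trans ?_
  have hc : ∀ c : ℝ, 0 < c → ContinuousOn (fun x : ℝ => (c * x + ε)⁻¹) (spectrum ℝ ρ) :=
    fun c hc => ContinuousOn.inv₀ (by fun_prop) fun x hx => by
      have := (spec_mem ρ hρ hx).1
      positivity
  have h2 : cfc (fun x : ℝ => (x + ε)⁻¹) (Real.exp (-M) • ρ) =
      cfc (fun x : ℝ => (Real.exp (-M) * x + ε)⁻¹) ρ := by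
    rw [← cfc_comp_smul (Real.exp (-M)) (fun x : ℝ => (x + ε)⁻¹) ρ ?_]
    · simp only [smul_eq_mul]
    · refine ContinuousOn.inv₀ (by fun_prop) ?_
      rintro _ ⟨x, hx, rfl⟩
      have := (spec_mem ρ hρ hx).1
      simp only [smul_eq_mul]
      positivity
  have h3 := hc 1 one_pos
  simp only [one_mul] at h3
  rw [h2, ← cfc_smul (Real.exp M) _ ρ h3]
  have h4 : ContinuousOn (fun x : ℝ => Real.exp M • (x + ε)⁻¹) (spectrum ℝ ρ) :=
    h3.const_smul (Real.exp M)
  refine cfc_mono (fun x hx => ?_) (hc _ (Real.exp_pos _)) h4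
  have hx0 := (spec_mem ρ hρ hx).1
  have he : Real.exp M * Real.exp (-M) = 1 := by rw [← Real.exp_add]; simp
  have hE : 1 ≤ Real.exp M := Real.one_le_exp hM
  have hEp := Real.exp_pos (-M)
  simp only [smul_eq_mul]
  rw [← div_eq_mul_inv, inv_le_comm₀ (by positivity) (by positivity), inv_div,
    div_le_iff₀ (by positivity)]
  nlinarith [mul_le_mul_of_nonneg_right hE hε.le]

lemma form_mono {S T : H →L[ℂ] H} (h : S ≤ T) (ξ : H) :
    (⟪ξ, S ξ⟫_ℂ).re ≤ (⟪ξ, T ξ⟫_ℂ).re := by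
  have := ((ContinuousLinearMap.le_def S T).1 h).re_inner_nonneg_right ξ
  simp only [ContinuousLinearMap.sub_apply, inner_sub_right, map_sub, RCLike.re_to_complex] at this
  linarith

lemma form_smul (c : ℝ) (T : H →L[ℂ] H) (ξ : H) :
    (⟪ξ, (c • T) ξ⟫_ℂ).re = c * (⟪ξ, T ξ⟫_ℂ).re := by
  rw [ContinuousLinearMap.smul_apply, ← Complex.coe_smul, inner_smul_right]
  simp

lemma half_res_le (ρ : H →L[ℂ] H) (hρ : 0 ≤ ρ) (ε : ℝ) (hε : 0 < ε) (ξ : H) :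
    (⟪opow ρ (1/2) ξ, (cfc (fun x : ℝ => (x + ε)⁻¹) ρ) (opow ρ (1/2) ξ)⟫_ℂ).re ≤ ‖ξ‖ ^ 2 := by
  have hsa : IsSelfAdjoint (opow ρ (1/2)) := cfc_predicate _ ρ
  have hc : ContinuousOn (fun x : ℝ => (x + ε)⁻¹) (spectrum ℝ ρ) :=
    ContinuousOn.inv₀ (by fun_prop) fun x hx => by
      have := (spec_mem ρ hρ hx).1
      positivity
  have hr : Continuous (fun x : ℝ => x ^ (1/2 : ℝ)) := Real.continuous_rpow_const (by norm_num)
  have hcr : ContinuousOn (fun x : ℝ => (x + ε)⁻¹ * x ^ (1/2 : ℝ)) (spectrum ℝ ρ) :=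
    hc.mul hr.continuousOn
  have h1 : opow ρ (1/2) * (cfc (fun x : ℝ => (x + ε)⁻¹) ρ * opow ρ (1/2)) ≤ 1 := by
    unfold opow
    rw [← cfc_mul _ _ ρ hc hr.continuousOn, ← cfc_mul _ _ ρ hr.continuousOn
      hcr]
    apply cfc_le_one
    intro x hx
    have hx0 := (spec_mem ρ hρ hx).1
    have : x ^ (1/2:ℝ) * x ^ (1/2:ℝ) = x := by
      rw [← Real.sqrt_eq_rpow, Real.mul_self_sqrt hx0]
    calc _ = (x ^ (1/2:ℝ) * x ^ (1/2:ℝ)) / (x + ε) := by ring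
      _ ≤ 1 := by rw [this, div_le_one (by positivity)]; linarith
  have h2 := form_mono h1 ξ
  rw [← ContinuousLinearMap.adjoint_inner_right, ← ContinuousLinearMap.star_eq_adjoint,
    hsa.star_eq]
  refine h2.trans (le_of_eq ?_)
  rw [ContinuousLinearMap.one_apply, inner_self_eq_norm_sq_to_K]
  norm_cast

/-- Let `ρ = exp (-H₀)` and `σ = ρ_X = exp (-(H₀+X))` be finite faithful
weights, with `X` bounded self-adjoint satisfying the Araki condition for `ρ` (with Araki
family `F` and `M = ‖X‖_A` bounding `‖F t‖` on the disc).  Then, as quadratic forms,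
`ρ^{1/2} ρ_X⁻¹ ρ^{1/2} ≤ e^M · I`, hence `ρ_X⁻¹ ≤ e^M ρ⁻¹`, and by operator-monotone
decrease of the inverse, `ρ_X ≥ e^{-M} ρ` in the Loewner order. -/
theorem statement5 {ι : Type*} (b : HilbertBasis ι ℂ H) (ρ σ X : H →L[ℂ] H)
    (hρ : IsFiniteWeight b ρ) (hσ : IsFiniteWeight b σ) (hX : IsSelfAdjoint X)
    (F : ℂ → H →L[ℂ] H) (hF : IsArakiFamily ρ X F)
    (M : ℝ) (hM : ∀ t ∈ ball (0:ℂ) (1/2), ‖F t‖ ≤ M)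
    (hσX : IsExpPerturbed ρ σ X) :
    (∀ ξ : H, invForm σ ((opow ρ (1/2)) ξ) ≤ ENNReal.ofReal (Real.exp M * ‖ξ‖ ^ 2)) ∧
    (∀ ξ : H, invForm σ ξ ≤ ENNReal.ofReal (Real.exp M) * invForm ρ ξ) ∧
    Real.exp (-M) • ρ ≤ σ := by
  have hM0 : 0 ≤ M := (norm_nonneg _).trans (hM 0 (by simp))
  have hL : Real.exp (-M) • ρ ≤ σ := loewner_bound ρ σ hρ.1 hσ.1 M
    (interp_bound ρ σ X hρ.1 hσ.1 F hF M hM hσX)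
  have hR : ∀ (ξ : H) (n : ℕ), invFormSeq σ ξ n ≤ Real.exp M * invFormSeq ρ ξ n := by
    intro ξ n
    have := form_mono (resolvent_le ρ σ hρ.1 hσ.1 M hM0 hL _ (Real.exp_pos (-(n:ℝ)))) ξ
    rwa [form_smul] at this
  refine ⟨fun ξ => iSup_le fun n => ENNReal.ofReal_le_ofReal ?_, fun ξ => iSup_le fun n => ?_, hL⟩
  · refine (hR _ n).trans (mul_le_mul_of_nonneg_left ?_ (Real.exp_pos _).le)
    exact half_res_le ρ hρ.1 _ (Real.exp_pos _) ξ
  · refine (ENNReal.ofReal_le_ofReal (hR ξ n)).trans ?_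
    rw [ENNReal.ofReal_mul (Real.exp_pos _).le]
    gcongr
    exact le_iSup (fun n => ENNReal.ofReal (invFormSeq ρ ξ n)) n
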